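/- arXiv:2403.11282 — 5 statements merged into one kernel-verified Lean document; each statement's English description precedes it below -/
import Mathlib

section
/- Let f : ℝ → ℝ be differentiable at a point x with x > 0 and f(x) > 0. Then the multiplicative derivative of f at x exists and equals exp(x·f'(x)/f(x)); precisely, the limit as h → 1 (h ≠ 1) of (f(x·h)/f(x))^(1/log h) exists and equals exp(x·f'(x)/f(x)). -/
/-! Near `h = 1` the base is positive, so the expression is
`exp (log (f (x * h) / f x) / log h)`. Numerator and denominator of the exponent both vanish at
`h = 1`, hence their quotient is the quotient of their difference quotients there and tends to
the quotient of the derivatives, `x * f' x / f x` and `1`. -/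

open scoped Topology

/-- The multiplicative (non-Newtonian) derivative of a function `f`, differentiable at
`x > 0` with `f x > 0`, exists and equals `exp (x * f' x / f x)`:
the limit as `h → 1` (`h ≠ 1`) of `(f (x * h) / f x) ^ (1 / log h)` is
`exp (x * deriv f x / f x)`. -/
theorem multiplicative_deriv_eq (f : ℝ → ℝ) (x : ℝ) (hx : 0 < x) (hfx : 0 < f x)
    (hf : DifferentiableAt ℝ f x) :
    Filter.Tendsto (fun h : ℝ => (f (x * h) / f x) ^ (1 / Real.log h))
      (𝓝[≠] (1 : ℝ)) (𝓝 (Real.exp (x * deriv f x / f x))) := by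
  have hmul : HasDerivAt (fun h : ℝ => x * h) x 1 := by
    simpa using (hasDerivAt_id (1 : ℝ)).const_mul x
  have hf' : HasDerivAt f (deriv f x) (x * 1) := by
    simpa using hf.hasDerivAt
  have hq : HasDerivAt (fun h : ℝ => f (x * h) / f x) (deriv f x * x / f x) 1 :=
    (hf'.comp 1 hmul).div_const (f x)
  have hq1 : f (x * 1) / f x = 1 := by rw [mul_one, div_self hfx.ne']
  have hnum : HasDerivAt (fun h : ℝ => Real.log (f (x * h) / f x)) (x * deriv f x / f x) 1 := by
    have := hq.log (by rw [hq1]; exact one_ne_zero)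
    rwa [hq1, div_one, mul_comm (deriv f x)] at this
  have hden : HasDerivAt Real.log 1 1 := by
    simpa using Real.hasDerivAt_log (one_ne_zero : (1 : ℝ) ≠ 0)
  have hlim := (hasDerivAt_iff_tendsto_slope.mp hnum).div
    (hasDerivAt_iff_tendsto_slope.mp hden) one_ne_zero
  rw [div_one] at hlim
  have hpos : ∀ᶠ h in 𝓝[≠] (1 : ℝ), 0 < f (x * h) / f x :=
    (hq.continuousAt.eventually (lt_mem_nhds (hq1.symm ▸ one_pos : 0 < f (x * 1) / f x))).filter_mono
      nhdsWithin_le_nhds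
  refine ((Real.continuous_exp.tendsto _).comp hlim).congr' ?_
  filter_upwards [hpos, self_mem_nhdsWithin] with h hh hne
  have hne' : h - 1 ≠ 0 := sub_ne_zero.mpr hne
  rw [Real.rpow_def_of_pos hh]
  simp only [Function.comp_apply, Pi.div_apply, slope_def_field, hq1, Real.log_one, sub_zero]
  rw [div_div_div_cancel_right₀ hne', mul_one_div]
end

section
/- The curvature and torsion of the tangent indicatrix x_t = t are κ_t(s) = √(1 + f(s)²) and τ_t(s) = σ(s)·√(1 + f(s)²) = f'(s)/(κ(s)·(1 + f(s)²)), where f = τ/κ and σ = f'/(κ·(1 + f²)^{3/2}). (This is Proposition 4.3 on the multiplicative curvatures of the multiplicative tangent indicatrix.) -/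
/-!
The unit tangent of the indicatrix is `n`, and the Frenet equation `n' = -κ t + τ b = κ (-t + f b)`
gives `‖n'‖ = κ √(1+f²)`, hence the curvature. With `g = (1+f²)^(-1/2)` it follows that
`Nt = g (-t + f b)` and `Bt = n × Nt = g (f t + b)`. Since `-t + f b` is orthogonal to `f t + b`,
the derivative of `g` does not contribute to `⟪Nt', Bt⟫`; since `t'` is a multiple of `n`, and
`⟪b', b⟫ = ⟪b', t⟫ = 0`, only the term `g f' b` of `Nt'` does, so `⟪Nt', Bt⟫ = g² f' = f'/(1+f²)`.

The Frenet equation is the expansion of `n'` in the orthonormal basis `t, n, t × n`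
(`expand_orthonormal_cross3`), with coefficients found by differentiating `⟪n, n⟫ = 1` and
`⟪n, t⟫ = 0`.
-/

open scoped RealInnerProductSpace Topology

/-- The cross product on `ℝ³` (as `EuclideanSpace ℝ (Fin 3)`). -/
noncomputable def cross3 (u v : EuclideanSpace ℝ (Fin 3)) : EuclideanSpace ℝ (Fin 3) :=
  (WithLp.equiv 2 (Fin 3 → ℝ)).symm
    ![u 1 * v 2 - u 2 * v 1, u 2 * v 0 - u 0 * v 2, u 0 * v 1 - u 1 * v 0]

local notation "E3" => EuclideanSpace ℝ (Fin 3)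

lemma inner_cross3_left (u v : E3) : ⟪u, cross3 u v⟫ = 0 := by
  simp [cross3, PiLp.inner_apply, Fin.sum_univ_three]; ring

lemma inner_cross3_right (u v : E3) : ⟪v, cross3 u v⟫ = 0 := by
  simp [cross3, PiLp.inner_apply, Fin.sum_univ_three]; ring

/-- Lagrange's identity. -/
lemma inner_cross3_self (u v : E3) :
    ⟪cross3 u v, cross3 u v⟫ = ⟪u, u⟫ * ⟪v, v⟫ - ⟪u, v⟫ ^ 2 := by
  simp only [cross3, PiLp.inner_apply, Fin.sum_univ_three]; simp; ring

/-- With `u = t`, `v = n`, `c = f` this computes `Bt = n × Nt`; the bracket is the double product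
`v × (u × v)` expanded by the triple product formula. -/
lemma cross3_frame (u v : E3) (a c : ℝ) :
    cross3 v (a • (-u + c • cross3 u v)) =
      a • (cross3 u v + c • (⟪v, v⟫ • u - ⟪u, v⟫ • v)) := by
  ext i
  fin_cases i <;>
  · simp [cross3, PiLp.inner_apply, Fin.sum_univ_three, -inner_self_eq_norm_sq_to_K]
    ring

lemma ContDiff.cross3 {u v : ℝ → E3} {k : WithTop ℕ∞} (hu : ContDiff ℝ k u)
    (hv : ContDiff ℝ k v) : ContDiff ℝ k (fun s => cross3 (u s) (v s)) := by
  rw [contDiff_euclidean] at hu hv ⊢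
  have h0 := hu 0
  have h1 := hu 1
  have h2 := hu 2
  have k0 := hv 0
  have k1 := hv 1
  have k2 := hv 2
  intro i
  fin_cases i <;>
  · simp [_root_.cross3]; fun_prop

lemma expand_orthonormal_cross3 {u v : E3} (hu : ⟪u, u⟫ = 1) (hv : ⟪v, v⟫ = 1)
    (huv : ⟪u, v⟫ = 0) (w : E3) :
    w = ⟪w, u⟫ • u + ⟪w, v⟫ • v + ⟪w, cross3 u v⟫ • cross3 u v := by
  have hc : ⟪cross3 u v, cross3 u v⟫ = 1 := by rw [inner_cross3_self, hu, hv, huv]; norm_num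
  have h1 := inner_cross3_left u v
  have h2 := inner_cross3_right u v
  have hon : Orthonormal ℝ ![u, v, cross3 u v] := by
    rw [orthonormal_iff_ite]
    intro i j
    fin_cases i <;> fin_cases j <;>
      simp [-inner_self_eq_norm_sq_to_K, hu, hv, huv, hc, h1, h2,
        real_inner_comm u v, real_inner_comm u (cross3 u v), real_inner_comm v (cross3 u v)]
  have hspan : ⊤ ≤ Submodule.span ℝ (Set.range ![u, v, cross3 u v]) :=
    (hon.linearIndependent.span_eq_top_of_card_eq_finrank (by simp)).ge
  have := (OrthonormalBasis.mk hon hspan).sum_repr' w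
  simpa [Fin.sum_univ_three, real_inner_comm] using this.symm

/-- Product rule for a pair of curves with constant inner product. -/
lemma inner_deriv_of_const {u v : ℝ → E3} (hu : Differentiable ℝ u) (hv : Differentiable ℝ v)
    {c : ℝ} (h : ∀ s, ⟪u s, v s⟫ = c) (s : ℝ) : ⟪deriv u s, v s⟫ = -⟪u s, deriv v s⟫ := by
  have h1 := (hu s).hasDerivAt.inner ℝ (hv s).hasDerivAt
  have h2 := h1.unique (by simpa [h] using hasDerivAt_const s c)
  linarith

/-- Proposition 4.3 (classical form): the curvature and torsion of the tangent
indicatrix `x_t = t` are `κ_t = √(1+f²)` and `τ_t = σ·√(1+f²) = f'/(κ·(1+f²))`. -/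
theorem tangent_indicatrix_curvatures
    (γ : ℝ → EuclideanSpace ℝ (Fin 3))
    (hγ : ContDiff ℝ (⊤ : ℕ∞) γ)
    (t n b : ℝ → EuclideanSpace ℝ (Fin 3)) (κ τ : ℝ → ℝ)
    (ht : t = deriv γ)
    (hunit : ∀ s, ‖t s‖ = 1)
    (hκ : κ = fun s => ‖deriv t s‖)
    (hκpos : ∀ s, 0 < κ s)
    (hn : n = fun s => (κ s)⁻¹ • deriv t s)
    (hb : b = fun s => cross3 (t s) (n s))
    (hτ : τ = fun s => ⟪deriv n s, b s⟫)
    (f : ℝ → ℝ) (hf : f = fun s => τ s / κ s)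
    (σ : ℝ → ℝ)
    (hσ : σ = fun s => deriv f s / (κ s * (1 + f s ^ 2) ^ ((3 : ℝ) / 2)))
    (Tt Nt Bt : ℝ → EuclideanSpace ℝ (Fin 3))
    (hTt : Tt = fun s => ‖deriv t s‖⁻¹ • deriv t s)
    (hNt : Nt = fun s => ‖deriv Tt s‖⁻¹ • deriv Tt s)
    (hBt : Bt = fun s => cross3 (Tt s) (Nt s))
    (κt τt : ℝ → ℝ)
    (hκt : κt = fun s => ‖deriv Tt s‖ / κ s)
    (hτt : τt = fun s => ⟪deriv Nt s, Bt s⟫ / κ s)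
    :
    ∀ s : ℝ,
      κt s = Real.sqrt (1 + f s ^ 2) ∧
      τt s = σ s * Real.sqrt (1 + f s ^ 2) ∧
      τt s = deriv f s / (κ s * (1 + f s ^ 2)) := by
  have htC : ContDiff ℝ (⊤ : ℕ∞) t := by
    rw [ht]; exact (contDiff_infty_iff_deriv.1 hγ).2
  have htC' : ContDiff ℝ (⊤ : ℕ∞) (deriv t) := (contDiff_infty_iff_deriv.1 htC).2
  have hκne : ∀ s, κ s ≠ 0 := fun s => (hκpos s).ne'
  -- The norm is smooth away from `0`, so `κ > 0` makes `κ`, and then the whole frame, smooth.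
  have hκC : ContDiff ℝ (⊤ : ℕ∞) κ := by
    rw [hκ]
    refine htC'.norm ℝ fun s hs => hκne s ?_
    rw [hκ]; simp [hs]
  have hnC : ContDiff ℝ (⊤ : ℕ∞) n := by
    rw [hn]; exact (hκC.inv hκne).smul htC'
  have hbC : ContDiff ℝ (⊤ : ℕ∞) b := by
    rw [hb]; exact htC.cross3 hnC
  have hτC : ContDiff ℝ (⊤ : ℕ∞) τ := by
    rw [hτ]; exact (contDiff_infty_iff_deriv.1 hnC).2.inner ℝ hbC
  have hfC : ContDiff ℝ (⊤ : ℕ∞) f := by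
    rw [hf]; exact hτC.div hκC hκne
  have htD : Differentiable ℝ t := htC.differentiable (by simp)
  have hnD : Differentiable ℝ n := hnC.differentiable (by simp)
  have hbD : Differentiable ℝ b := hbC.differentiable (by simp)
  have hfD : Differentiable ℝ f := hfC.differentiable (by simp)
  have hTn : Tt = n := by rw [hTt, hn, hκ]
  have ht' : ∀ s, deriv t s = κ s • n s := fun s => by
    rw [hn]; simp [smul_smul, hκne s]
  have htt : ∀ s, ⟪t s, t s⟫ = 1 := fun s => by
    rw [real_inner_self_eq_norm_sq, hunit]; norm_num
  have hnn : ∀ s, ⟪n s, n s⟫ = 1 := fun s => by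
    have h : ‖deriv t s‖ = κ s := by rw [hκ]
    rw [real_inner_self_eq_norm_sq, hn]
    simp only [norm_smul, norm_inv, Real.norm_eq_abs, abs_of_pos (hκpos s), h]
    simp [hκne s]
  have htn : ∀ s, ⟪t s, n s⟫ = 0 := fun s => by
    have h := inner_deriv_of_const htD htD htt s
    rw [ht', real_inner_smul_left, real_inner_smul_right, real_inner_comm (t s) (n s)] at h
    have h2 : κ s * ⟪t s, n s⟫ = 0 := by linarith
    exact (mul_eq_zero.1 h2).resolve_left (hκne s)
  have hbs : ∀ s, b s = cross3 (t s) (n s) := fun s => by rw [hb]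
  have htb : ∀ s, ⟪t s, b s⟫ = 0 := fun s => by rw [hbs]; exact inner_cross3_left _ _
  have hnb : ∀ s, ⟪n s, b s⟫ = 0 := fun s => by rw [hbs]; exact inner_cross3_right _ _
  have hbb : ∀ s, ⟪b s, b s⟫ = 1 := fun s => by
    rw [hbs, inner_cross3_self, htt, hnn, htn]; norm_num
  have hn' : ∀ s, deriv n s = κ s • (-t s + f s • b s) := fun s => by
    have e := expand_orthonormal_cross3 (htt s) (hnn s) (htn s) (deriv n s)
    have e1 : ⟪deriv n s, t s⟫ = -κ s := by
      rw [inner_deriv_of_const hnD htD (fun s => by rw [real_inner_comm]; exact htn s), ht',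
        real_inner_smul_right, hnn, mul_one]
    have e2 : ⟪deriv n s, n s⟫ = 0 := by
      have := inner_deriv_of_const hnD hnD hnn s
      rw [real_inner_comm (deriv n s) (n s)] at this
      linarith
    have e3 : ⟪deriv n s, b s⟫ = κ s * f s := by
      rw [hf, mul_div_cancel₀ _ (hκne s), hτ]
    rw [← hbs, e1, e2, e3] at e
    rw [e]; module
  have hpos : ∀ s, 0 < 1 + f s ^ 2 := fun s => by positivity
  have hnorm : ∀ s, ‖deriv n s‖ = κ s * √(1 + f s ^ 2) := fun s => by
    rw [hn', norm_smul, Real.norm_eq_abs, abs_of_pos (hκpos s), norm_eq_sqrt_real_inner]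
    congr 2
    simp only [inner_add_left, inner_add_right, inner_neg_left, inner_neg_right,
      real_inner_smul_left, real_inner_smul_right, htt, htb, hbb, real_inner_comm (t s) (b s)]
    ring
  have hsq : ∀ s, √(1 + f s ^ 2) ≠ 0 := fun s => (Real.sqrt_pos.2 (hpos s)).ne'
  have hNs : Nt = fun s => (√(1 + f s ^ 2))⁻¹ • (-t s + f s • b s) := by
    rw [hNt, hTn]
    funext s
    rw [hnorm, hn', smul_smul]
    congr 1
    have := hκne s
    have := hsq s
    field_simp
  intro s
  have hg : DifferentiableAt ℝ (fun s => (√(1 + f s ^ 2))⁻¹) s :=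
    ((((hfD s).pow 2).const_add 1).sqrt (hpos s).ne').inv (hsq s)
  have hN' := hg.hasDerivAt.smul
    ((htD s).hasDerivAt.neg.add ((hfD s).hasDerivAt.smul (hbD s).hasDerivAt))
  have hNs' : (fun s => (√(1 + f s ^ 2))⁻¹) • (-t + f • b) = Nt := by rw [hNs]; rfl
  rw [hNs'] at hN'
  have hNd := hN'.deriv
  have hB : Bt s = (√(1 + f s ^ 2))⁻¹ • (b s + f s • t s) := by
    rw [hBt, hTn, hNs]
    simp only [hbs]
    rw [cross3_frame, hnn, htn, one_smul, zero_smul, sub_zero]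
  have hb1 : ⟪deriv b s, b s⟫ = 0 := by
    have := inner_deriv_of_const hbD hbD hbb s
    rw [real_inner_comm (deriv b s) (b s)] at this
    linarith
  have hb2 : ⟪deriv b s, t s⟫ = 0 := by
    rw [inner_deriv_of_const hbD htD (fun s => by rw [real_inner_comm]; exact htb s), ht',
      real_inner_smul_right, real_inner_comm, hnb]; simp
  have hinner : ⟪deriv Nt s, Bt s⟫ = deriv f s / (1 + f s ^ 2) := by
    have hg2 : (√(1 + f s ^ 2))⁻¹ * (√(1 + f s ^ 2))⁻¹ = (1 + f s ^ 2)⁻¹ := by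
      rw [← mul_inv, Real.mul_self_sqrt (hpos s).le]
    rw [hNd, hB, ht', div_eq_mul_inv, ← hg2]
    simp only [Pi.add_apply, Pi.neg_apply, Pi.smul_apply', inner_add_left, inner_add_right,
      inner_neg_left, real_inner_smul_left, real_inner_smul_right, htt, htb, hbb, hnb, hb1, hb2,
      real_inner_comm (t s) (b s), real_inner_comm (t s) (n s), htn]
    ring
  have h3 : τt s = deriv f s / (κ s * (1 + f s ^ 2)) := by
    rw [hτt]
    simp only [hinner]
    rw [div_div, mul_comm]
  refine ⟨?_, ?_, h3⟩
  · rw [hκt, hTn]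
    simp only [hnorm]
    exact mul_div_cancel_left₀ _ (hκne s)
  · rw [h3, hσ]
    have h32 : (1 + f s ^ 2) ^ ((3 : ℝ) / 2) = (1 + f s ^ 2) * √(1 + f s ^ 2) := by
      rw [Real.sqrt_eq_rpow, ← Real.rpow_one_add' (hpos s).le (by norm_num)]
      norm_num
    simp only [h32]
    have := hκne s
    have := hsq s
    have := (hpos s).ne'
    field_simp
end

section
/- Assume additionally τ(s) > 0 for all s. Then the curvature and torsion of the binormal indicatrix x_b = b are κ_b(s) = √(1 + f(s)²)/f(s) and τ_b(s) = −σ(s)·√(1 + f(s)²)/f(s), where f = τ/κ and σ = f'/(κ·(1 + f²)^{3/2}). (This is Proposition 4.9 on the multiplicative curvatures of the multiplicative binormal indicatrix.) -/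
/-! Differentiating along the Frenet frame `(t, n, b)` gives `b' = -τ n`, hence `T_b = -n` and
`T_b' = κ t - τ b = κ (t - f b)`.  Since `t ⟂ b` are unit vectors, `‖T_b'‖ = κ √(1 + f²)`, which is
the formula for `κ_b`, and `N_b = (t - f b) / √(1 + f²)`, `B_b = -n × N_b = (f t + b) / √(1 + f²)`.
Differentiating `N_b`, the derivative of the scalar factor contributes a multiple of
`t - f b ⟂ B_b`, and `t' - f b'` is a multiple of `n ⟂ B_b`; only `-f' b / √(1 + f²)` survives, so
`⟪N_b', B_b⟫ = -f' / (1 + f²)`.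

The Frenet equation `n' = -κ t + τ b` is the expansion of `n'` in the orthonormal frame
(`eq_frame_expansion`); the one for `b` then follows from the product rule for the cross product
(`hasDerivAt_cross3`) and the triple product expansion (`cross3_cross3`). -/

open scoped RealInnerProductSpace Topology

theorem cross3_cross3 (u v w : EuclideanSpace ℝ (Fin 3)) :
    cross3 u (cross3 v w) = ⟪u, w⟫ • v - ⟪u, v⟫ • w := by
  ext i
  fin_cases i <;> simp [cross3, PiLp.inner_apply, Fin.sum_univ_three] <;> ring

theorem cross3_self (u : EuclideanSpace ℝ (Fin 3)) : cross3 u u = 0 := by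
  ext i
  fin_cases i <;> simp [cross3] <;> ring

theorem cross3_anticomm (u v : EuclideanSpace ℝ (Fin 3)) : cross3 u v = -cross3 v u := by
  ext i
  fin_cases i <;> simp [cross3] <;> ring

theorem cross3_add_right (u v w : EuclideanSpace ℝ (Fin 3)) :
    cross3 u (v + w) = cross3 u v + cross3 u w := by
  ext i
  fin_cases i <;> simp [cross3] <;> ring

theorem cross3_smul_right (c : ℝ) (u v : EuclideanSpace ℝ (Fin 3)) :
    cross3 u (c • v) = c • cross3 u v := by
  ext i
  fin_cases i <;> simp [cross3] <;> ring

theorem cross3_smul_left (c : ℝ) (u v : EuclideanSpace ℝ (Fin 3)) :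
    cross3 (c • u) v = c • cross3 u v := by
  ext i
  fin_cases i <;> simp [cross3] <;> ring

theorem inner_self_cross3 (u v : EuclideanSpace ℝ (Fin 3)) : ⟪u, cross3 u v⟫ = 0 := by
  simp [cross3, PiLp.inner_apply, Fin.sum_univ_three, -inner_self_eq_norm_sq_to_K]; ring

theorem inner_right_cross3 (u v : EuclideanSpace ℝ (Fin 3)) : ⟪v, cross3 u v⟫ = 0 := by
  simp [cross3, PiLp.inner_apply, Fin.sum_univ_three, -inner_self_eq_norm_sq_to_K]; ring

theorem inner_cross3_cross3 (u v : EuclideanSpace ℝ (Fin 3)) :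
    ⟪cross3 u v, cross3 u v⟫ = ⟪u, u⟫ * ⟪v, v⟫ - ⟪u, v⟫ ^ 2 := by
  simp [cross3, PiLp.inner_apply, Fin.sum_univ_three, -inner_self_eq_norm_sq_to_K]; ring

theorem hasDerivAt_cross3 {u v : ℝ → EuclideanSpace ℝ (Fin 3)}
    {u' v' : EuclideanSpace ℝ (Fin 3)} {s : ℝ} (hu : HasDerivAt u u' s) (hv : HasDerivAt v v' s) :
    HasDerivAt (fun x => cross3 (u x) (v x)) (cross3 u' (v s) + cross3 (u s) v') s := by
  have hu' : ∀ i, HasDerivAt (fun x => u x i) (u' i) s := fun i =>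
    (EuclideanSpace.proj (𝕜 := ℝ) i).hasFDerivAt.comp_hasDerivAt s hu
  have hv' : ∀ i, HasDerivAt (fun x => v x i) (v' i) s := fun i =>
    (EuclideanSpace.proj (𝕜 := ℝ) i).hasFDerivAt.comp_hasDerivAt s hv
  have hco : HasDerivAt (fun x => (cross3 (u x) (v x)).ofLp)
      (cross3 u' (v s) + cross3 (u s) v').ofLp s := by
    rw [hasDerivAt_pi]
    intro i
    fin_cases i
    · exact (((hu' 1).mul (hv' 2)).sub ((hu' 2).mul (hv' 1))).congr_deriv (by
        simp [cross3]; ring)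
    · exact (((hu' 2).mul (hv' 0)).sub ((hu' 0).mul (hv' 2))).congr_deriv (by
        simp [cross3]; ring)
    · exact (((hu' 0).mul (hv' 1)).sub ((hu' 1).mul (hv' 0))).congr_deriv (by
        simp [cross3]; ring)
  exact (PiLp.continuousLinearEquiv 2 ℝ (fun _ : Fin 3 => ℝ)).symm.hasFDerivAt.comp_hasDerivAt s hco

/-- Expansion of a vector in the orthonormal frame `(u, v, u × v)`. -/
theorem eq_frame_expansion {u v : EuclideanSpace ℝ (Fin 3)} (hu : ⟪u, u⟫ = (1 : ℝ))
    (hv : ⟪v, v⟫ = (1 : ℝ)) (huv : ⟪u, v⟫ = (0 : ℝ)) (x : EuclideanSpace ℝ (Fin 3)) :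
    x = ⟪x, u⟫ • u + ⟪x, v⟫ • v + ⟪x, cross3 u v⟫ • cross3 u v := by
  have hw := inner_cross3_cross3 u v
  rw [hu, hv, huv] at hw
  have hon : Orthonormal ℝ ![u, v, cross3 u v] := by
    rw [orthonormal_iff_ite]
    have h1 := inner_self_cross3 u v
    have h2 := inner_right_cross3 u v
    intro i j
    fin_cases i <;> fin_cases j <;>
      simp [hu, hv, huv, h1, h2, hw, real_inner_comm u v, real_inner_comm u (cross3 u v),
        real_inner_comm v (cross3 u v), -inner_self_eq_norm_sq_to_K]
  let e := (basisOfOrthonormalOfCardEqFinrank hon (by simp)).toOrthonormalBasis (by simpa using hon)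
  have h := (e.sum_repr' x).symm
  simpa [e, Fin.sum_univ_three, real_inner_comm x] using h

/-- If `⟪u, v⟫` is constant, then `⟪u, v'⟫ + ⟪u', v⟫ = 0`. With `u, v ∈ {t, n}` this yields the
coefficients in the Frenet equations. -/
theorem inner_deriv_of_inner_const {u v : ℝ → EuclideanSpace ℝ (Fin 3)}
    {u' v' : EuclideanSpace ℝ (Fin 3)} {s c : ℝ} (hu : HasDerivAt u u' s) (hv : HasDerivAt v v' s)
    (h : ∀ x, ⟪u x, v x⟫ = c) : ⟪u s, v'⟫ + ⟪u', v s⟫ = 0 := by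
  have h1 := hu.inner ℝ hv
  rw [show (fun x => ⟪u x, v x⟫) = fun _ => c from funext h] at h1
  exact h1.unique (hasDerivAt_const s c)

/-- Proposition 4.9 (classical form): if `τ > 0` then the curvature and torsion of the
binormal indicatrix `x_b = b` are `κ_b = √(1+f²)/f` and `τ_b = -σ·√(1+f²)/f`. -/
theorem binormal_indicatrix_curvatures
    (γ : ℝ → EuclideanSpace ℝ (Fin 3))
    (hγ : ContDiff ℝ (⊤ : ℕ∞) γ)
    (t n b : ℝ → EuclideanSpace ℝ (Fin 3)) (κ τ : ℝ → ℝ)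
    (ht : t = deriv γ)
    (hunit : ∀ s, ‖t s‖ = 1)
    (hκ : κ = fun s => ‖deriv t s‖)
    (hκpos : ∀ s, 0 < κ s)
    (hn : n = fun s => (κ s)⁻¹ • deriv t s)
    (hb : b = fun s => cross3 (t s) (n s))
    (hτ : τ = fun s => ⟪deriv n s, b s⟫)
    (hτpos : ∀ s, 0 < τ s)
    (f : ℝ → ℝ) (hf : f = fun s => τ s / κ s)
    (σ : ℝ → ℝ)
    (hσ : σ = fun s => deriv f s / (κ s * (1 + f s ^ 2) ^ ((3 : ℝ) / 2)))
    (Tb Nb Bb : ℝ → EuclideanSpace ℝ (Fin 3))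
    (hTb : Tb = fun s => ‖deriv b s‖⁻¹ • deriv b s)
    (hNb : Nb = fun s => ‖deriv Tb s‖⁻¹ • deriv Tb s)
    (hBb : Bb = fun s => cross3 (Tb s) (Nb s))
    (κb τb : ℝ → ℝ)
    (hκb : κb = fun s => ‖deriv Tb s‖ / τ s)
    (hτb : τb = fun s => ⟪deriv Nb s, Bb s⟫ / τ s)
    :
    ∀ s : ℝ,
      κb s = Real.sqrt (1 + f s ^ 2) / f s ∧
      τb s = -(σ s * Real.sqrt (1 + f s ^ 2) / f s) := by
  have htd : ContDiff ℝ (⊤ : ℕ∞) t := ht ▸ (contDiff_infty_iff_deriv.1 hγ).2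
  have ht'd : ContDiff ℝ (⊤ : ℕ∞) (deriv t) := (contDiff_infty_iff_deriv.1 htd).2
  have ht'0 : ∀ s, deriv t s ≠ 0 := fun s h => by
    have := hκpos s
    simp [hκ, h] at this
  have hκd : ContDiff ℝ (⊤ : ℕ∞) κ := hκ ▸ ht'd.norm ℝ ht'0
  have hnd : ContDiff ℝ (⊤ : ℕ∞) n := by
    rw [hn]
    exact (hκd.inv fun s => (hκpos s).ne').smul ht'd
  have hn'd : ContDiff ℝ (⊤ : ℕ∞) (deriv n) := (contDiff_infty_iff_deriv.1 hnd).2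
  have hD {u : ℝ → EuclideanSpace ℝ (Fin 3)} (hu : ContDiff ℝ (⊤ : ℕ∞) u) (s : ℝ) :
      HasDerivAt u (deriv u s) s := ((contDiff_infty_iff_deriv.1 hu).1 s).hasDerivAt
  have hκn : ∀ s, deriv t s = κ s • n s := fun s => by
    rw [hn]
    simp [smul_smul, (hκpos s).ne']
  have htt : ∀ s, ⟪t s, t s⟫ = (1 : ℝ) := fun s => by
    rw [real_inner_self_eq_norm_sq, hunit]; norm_num
  have hnn : ∀ s, ⟪n s, n s⟫ = (1 : ℝ) := fun s => by
    have h1 : ‖n s‖ = 1 := by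
      have hk : ‖deriv t s‖ = κ s := by rw [hκ]
      rw [hn, norm_smul, hk, Real.norm_of_nonneg (inv_nonneg.2 (hκpos s).le),
        inv_mul_cancel₀ (hκpos s).ne']
    rw [real_inner_self_eq_norm_sq, h1]; norm_num
  have htn : ∀ s, ⟪t s, n s⟫ = (0 : ℝ) := fun s => by
    have h := inner_deriv_of_inner_const (hD htd s) (hD htd s) htt
    rw [real_inner_comm, hκn, real_inner_smul_left, real_inner_comm] at h
    have := hκpos s
    have h2 : κ s * ⟪t s, n s⟫ = 0 := by linarith
    exact (mul_eq_zero.1 h2).resolve_left this.ne'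
  have hbs : ∀ s, b s = cross3 (t s) (n s) := fun s => by rw [hb]
  have htb : ∀ s, ⟪t s, b s⟫ = (0 : ℝ) := fun s => by rw [hbs, inner_self_cross3]
  have hnb : ∀ s, ⟪n s, b s⟫ = (0 : ℝ) := fun s => by rw [hbs, inner_right_cross3]
  have hbb : ∀ s, ⟪b s, b s⟫ = (1 : ℝ) := fun s => by
    rw [hbs, inner_cross3_cross3, htt, hnn, htn]; norm_num
  have hn' : ∀ s, deriv n s = -κ s • t s + τ s • b s := fun s => by
    have h1 := inner_deriv_of_inner_const (hD htd s) (hD hnd s) htn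
    have h2 := inner_deriv_of_inner_const (hD hnd s) (hD hnd s) hnn
    rw [hκn, real_inner_smul_left, hnn, real_inner_comm] at h1
    rw [real_inner_comm] at h2
    have e1 : ⟪deriv n s, t s⟫ = -κ s := by linarith
    have e2 : ⟪deriv n s, n s⟫ = (0 : ℝ) := by linarith
    have e3 : ⟪deriv n s, cross3 (t s) (n s)⟫ = τ s := by rw [hτ, hb]
    have h := eq_frame_expansion (htt s) (hnn s) (htn s) (deriv n s)
    rw [e1, e2, e3, ← hbs] at h
    rw [h]; simp
  have hb' : ∀ s, HasDerivAt b (-τ s • n s) s := fun s => by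
    have h := hasDerivAt_cross3 (hD htd s) (hD hnd s)
    rw [← hb] at h
    refine h.congr_deriv ?_
    rw [hκn, hn', cross3_smul_left, cross3_self, cross3_add_right, cross3_smul_right,
      cross3_smul_right, cross3_self, hbs, cross3_cross3, htt, htn]
    simp
  have hτd : Differentiable ℝ τ := fun s => by
    rw [hτ]
    exact ((hD hn'd s).inner ℝ (hb' s)).differentiableAt
  have hfd : ∀ s, HasDerivAt f (deriv f s) s := fun s => by
    rw [hasDerivAt_deriv_iff, hf]
    exact (hτd s).div ((hκd.differentiable (by simp)) s) (hκpos s).ne'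
  have hTb' : Tb = fun s => -n s := by
    rw [hTb]
    funext s
    have h1 : ‖n s‖ = 1 := by
      have := hnn s
      rw [real_inner_self_eq_norm_sq] at this
      nlinarith [norm_nonneg (n s)]
    rw [(hb' s).deriv, norm_smul, h1, mul_one, norm_neg, Real.norm_of_nonneg (hτpos s).le, smul_smul]
    rw [mul_neg, inv_mul_cancel₀ (hτpos s).ne', neg_one_smul]
  have hτf : ∀ s, τ s = κ s * f s := fun s => by
    rw [hf]
    have := (hκpos s).ne'
    field_simp
  have hTb'' : ∀ s, deriv Tb s = κ s • (t s - f s • b s) := fun s => by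
    rw [hTb', deriv.fun_neg, hn', hτf]
    module
  have hpos : ∀ s, 0 < 1 + f s ^ 2 := fun s => by positivity
  have hnorm : ∀ s, ‖deriv Tb s‖ = κ s * √(1 + f s ^ 2) := fun s => by
    have h : ‖t s - f s • b s‖ ^ 2 = 1 + f s ^ 2 := by
      rw [← real_inner_self_eq_norm_sq]
      simp only [inner_sub_left, inner_sub_right, real_inner_smul_left, real_inner_smul_right, htt,
        hbb, htb, real_inner_comm (t s) (b s)]
      ring
    rw [hTb'', norm_smul, Real.norm_of_nonneg (hκpos s).le, ← h, Real.sqrt_sq (norm_nonneg _)]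
  have hNb' : Nb = fun s => (√(1 + f s ^ 2))⁻¹ • (t s - f s • b s) := by
    rw [hNb]
    funext s
    rw [hnorm, hTb'', smul_smul]
    congr 1
    have := (hκpos s).ne'
    field_simp
  intro s
  have hκs := hκpos s
  have hfs : 0 < f s := by
    rw [hf]
    exact div_pos (hτpos s) hκs
  have hw : 0 < √(1 + f s ^ 2) := Real.sqrt_pos.2 (hpos s)
  constructor
  · rw [hκb]
    simp only
    rw [hnorm, hτf]
    field_simp
  ·
    -- Only the existence of `w'` matters, because it multiplies a vector orthogonal to `B_b`.
    obtain ⟨w', hw'⟩ : ∃ w', HasDerivAt (fun x => (√(1 + f x ^ 2))⁻¹) w' s :=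
      ⟨_, ((((hfd s).fun_pow 2).const_add 1).sqrt (hpos s).ne').fun_inv hw.ne'⟩
    have hN : HasDerivAt Nb ((√(1 + f s ^ 2))⁻¹ •
        (deriv t s - (f s • -τ s • n s + deriv f s • b s)) + w' • (t s - f s • b s)) s := by
      rw [hNb']
      exact hw'.smul ((hD htd s).sub ((hfd s).smul (hb' s)))
    have hcnt : cross3 (n s) (t s) = -b s := by rw [cross3_anticomm, hbs]
    have hcnb : cross3 (n s) (b s) = t s := by
      rw [hbs, cross3_cross3, hnn, real_inner_comm, htn]
      simp
    have hB : Bb s = (√(1 + f s ^ 2))⁻¹ • (f s • t s + b s) := by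
      have hneg : -n s = (-1 : ℝ) • n s := by module
      have hsub : t s - f s • b s = t s + (-f s) • b s := by module
      rw [hBb, hTb', hNb']
      simp only
      rw [hneg, hsub, cross3_smul_left, cross3_smul_right, cross3_add_right, cross3_smul_right,
        hcnt, hcnb]
      module
    have hin : ⟪deriv Nb s, Bb s⟫ = -deriv f s / √(1 + f s ^ 2) ^ 2 := by
      rw [hB, hN.deriv, hκn]
      simp only [inner_add_left, inner_sub_left, inner_add_right, real_inner_smul_left,
        real_inner_smul_right, htt, hbb, htb, hnb, htn, real_inner_comm (t s) (b s),
        real_inner_comm (t s) (n s)]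
      field_simp
      ring
    have hrpow : (1 + f s ^ 2) ^ ((3 : ℝ) / 2) = √(1 + f s ^ 2) ^ 3 := by
      rw [Real.sqrt_eq_rpow, ← Real.rpow_natCast _ 3, ← Real.rpow_mul (hpos s).le]
      norm_num
    rw [hτb, hσ]
    simp only
    rw [hin, hrpow, hτf]
    field_simp
end

section
/- (Intermediate claim in the proof of Theorem 4.11.) Suppose v ∈ ℝ³ is a fixed unit vector and c is a constant with ⟪n(s), v⟫ = c for all s. Then for all s, σ(s)²·(1 − c²) = c²; equivalently, writing c = cos θ, one has σ(s)² = cot²θ, so the slant-helix function σ is determined (up to sign) by the constant angle θ between the principal normal and the axis. -/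
/-!
Write `p = ⟪t, v⟫` and `q = ⟪b, v⟫`. The Frenet equations give `p' = κ c` and `q' = -τ c`, while
differentiating the constant `⟪n, v⟫ = c` gives `0 = -κ p + τ q`, that is `p = f q`. Since
`(t, n, b)` is orthonormal, `p² + c² + q² = 1`, so `q² (1 + f²) = 1 - c²`. Differentiating
`p = f q` gives `κ c (1 + f²) = f' q`. Squaring and eliminating `q` yields
`f'² (1 - c²) = κ² c² (1 + f²)³`, which is the claim after division by `κ² (1 + f²)³`. No division
by `1 - c²` occurs, so the case `c = ±1` needs no separate treatment.

The Frenet equations come from expanding `n'` in the frame (`frame_expansion`) and from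
differentiating `⟪t × n, v⟫` as a polynomial in coordinates (`hasDerivAt_inner_cross3`).
-/

open scoped RealInnerProductSpace Topology

theorem inner_eq_coords (x y : EuclideanSpace ℝ (Fin 3)) :
    ⟪x, y⟫ = x 0 * y 0 + x 1 * y 1 + x 2 * y 2 := by
  simp [PiLp.inner_apply, Fin.sum_univ_three, mul_comm]

theorem cross3_zero (u v : EuclideanSpace ℝ (Fin 3)) :
    cross3 u v 0 = u 1 * v 2 - u 2 * v 1 := rfl

theorem cross3_one (u v : EuclideanSpace ℝ (Fin 3)) :
    cross3 u v 1 = u 2 * v 0 - u 0 * v 2 := rfl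

theorem cross3_two (u v : EuclideanSpace ℝ (Fin 3)) :
    cross3 u v 2 = u 0 * v 1 - u 1 * v 0 := rfl

/-- If `t, n` are orthonormal, then `t, n, t × n` is an orthonormal basis, so every `w` is the
sum of its projections onto the three vectors. -/
theorem frame_expansion {t n : EuclideanSpace ℝ (Fin 3)} (htt : ⟪t, t⟫ = 1) (hnn : ⟪n, n⟫ = 1)
    (htn : ⟪t, n⟫ = 0) (w : EuclideanSpace ℝ (Fin 3)) :
    w = ⟪w, t⟫ • t + ⟪w, n⟫ • n + ⟪w, cross3 t n⟫ • cross3 t n := by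
  -- The matrix with rows `t, n, t × n` satisfies `M * Mᵀ = 1`, hence `Mᵀ * M = 1`.
  let M : Matrix (Fin 3) (Fin 3) ℝ := Matrix.of ![⇑t, ⇑n, ⇑(cross3 t n)]
  rw [inner_eq_coords] at htt hnn htn
  have hM : M * M.transpose = 1 := by
    ext i j
    fin_cases i <;> fin_cases j <;>
      simp [M, Matrix.mul_apply, Fin.sum_univ_three, cross3_zero, cross3_one, cross3_two] <;>
      first
        | linear_combination htt
        | linear_combination hnn
        | linear_combination htn
        | ring1
        | linear_combination
            (n 0 * n 0 + n 1 * n 1 + n 2 * n 2) * htt + hnn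
              - (t 0 * n 0 + t 1 * n 1 + t 2 * n 2) * htn
  have hM' : M.transpose * M = 1 := mul_eq_one_comm.mp hM
  have e : ∀ i j : Fin 3, t i * t j + n i * n j + cross3 t n i * cross3 t n j
      = (1 : Matrix (Fin 3) (Fin 3) ℝ) i j := by
    intro i j
    rw [← hM']
    simp [M, Matrix.mul_apply, Fin.sum_univ_three]
  simp only [inner_eq_coords]
  ext i
  have e0 := e 0 i
  have e1 := e 1 i
  have e2 := e 2 i
  simp only [PiLp.add_apply, PiLp.smul_apply, smul_eq_mul]
  fin_cases i <;> simp [Matrix.one_apply] at e0 e1 e2 ⊢ <;>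
    linear_combination (-w 0) * e0 - w 1 * e1 - w 2 * e2

theorem contDiff_cross3 {k : WithTop ℕ∞} {x y : ℝ → EuclideanSpace ℝ (Fin 3)}
    (hx : ContDiff ℝ k x) (hy : ContDiff ℝ k y) : ContDiff ℝ k fun s => cross3 (x s) (y s) := by
  rw [contDiff_euclidean] at hx hy ⊢
  intro i
  fin_cases i
  · exact ((hx 1).mul (hy 2)).sub ((hx 2).mul (hy 1))
  · exact ((hx 2).mul (hy 0)).sub ((hx 0).mul (hy 2))
  · exact ((hx 0).mul (hy 1)).sub ((hx 1).mul (hy 0))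

theorem hasDerivAt_inner_cross3 {x y : ℝ → EuclideanSpace ℝ (Fin 3)}
    {x' y' : EuclideanSpace ℝ (Fin 3)} {s : ℝ} (hx : HasDerivAt x x' s) (hy : HasDerivAt y y' s)
    (v : EuclideanSpace ℝ (Fin 3)) :
    HasDerivAt (fun s => ⟪cross3 (x s) (y s), v⟫)
      (⟪cross3 x' (y s), v⟫ + ⟪cross3 (x s) y', v⟫) s := by
  have coord : ∀ {z : ℝ → EuclideanSpace ℝ (Fin 3)} {z' : EuclideanSpace ℝ (Fin 3)},
      HasDerivAt z z' s → ∀ i, HasDerivAt (fun s => z s i) (z' i) s := fun hz i =>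
    (EuclideanSpace.proj (𝕜 := ℝ) i).hasFDerivAt.comp_hasDerivAt s hz
  replace hx := coord hx
  replace hy := coord hy
  simp only [inner_eq_coords, cross3_zero, cross3_one, cross3_two]
  refine HasDerivAt.congr_deriv
    ((((((hx 1).mul (hy 2)).sub ((hx 2).mul (hy 1))).mul_const (v 0)).add
      ((((hx 2).mul (hy 0)).sub ((hx 0).mul (hy 2))).mul_const (v 1))).add
      ((((hx 0).mul (hy 1)).sub ((hx 1).mul (hy 0))).mul_const (v 2))) ?_
  ring

/-- Intermediate claim in the proof of Theorem 4.11: if the principal normal makes a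
constant angle with a fixed unit vector `v`, `⟪n s, v⟫ = c`, then
`σ(s)² · (1 - c²) = c²` for all `s` (with `c = cos θ` this says `σ² = cot² θ`). -/
theorem slant_helix_axis_angle
    (γ : ℝ → EuclideanSpace ℝ (Fin 3))
    (hγ : ContDiff ℝ (⊤ : ℕ∞) γ)
    (t n b : ℝ → EuclideanSpace ℝ (Fin 3)) (κ τ : ℝ → ℝ)
    (ht : t = deriv γ)
    (hunit : ∀ s, ‖t s‖ = 1)
    (hκ : κ = fun s => ‖deriv t s‖)
    (hκpos : ∀ s, 0 < κ s)
    (hn : n = fun s => (κ s)⁻¹ • deriv t s)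
    (hb : b = fun s => cross3 (t s) (n s))
    (hτ : τ = fun s => ⟪deriv n s, b s⟫)
    (f : ℝ → ℝ) (hf : f = fun s => τ s / κ s)
    (σ : ℝ → ℝ)
    (hσ : σ = fun s => deriv f s / (κ s * (1 + f s ^ 2) ^ ((3 : ℝ) / 2)))
    (v : EuclideanSpace ℝ (Fin 3)) (c : ℝ) (hv : ‖v‖ = 1)
    (hangle : ∀ s : ℝ, ⟪n s, v⟫ = c)
    :
    ∀ s : ℝ, σ s ^ 2 * (1 - c ^ 2) = c ^ 2 := by
  have hT : ContDiff ℝ (⊤ : ℕ∞) t := by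
    rw [ht]; exact (contDiff_infty_iff_deriv.mp hγ).2
  have hT' : ContDiff ℝ (⊤ : ℕ∞) (deriv t) := (contDiff_infty_iff_deriv.mp hT).2
  have hκ0 : ∀ s, κ s ≠ 0 := fun s => (hκpos s).ne'
  have hκnorm : ∀ s, ‖deriv t s‖ = κ s := fun s => by rw [hκ]
  have hK : ContDiff ℝ (⊤ : ℕ∞) κ := by
    rw [hκ]
    refine hT'.norm ℝ fun s => ?_
    rw [← norm_ne_zero_iff, hκnorm]
    exact hκ0 s
  have hN : ContDiff ℝ (⊤ : ℕ∞) n := by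
    rw [hn]; exact (hK.inv hκ0).smul hT'
  have hN' : ContDiff ℝ (⊤ : ℕ∞) (deriv n) := (contDiff_infty_iff_deriv.mp hN).2
  have hB : ContDiff ℝ (⊤ : ℕ∞) b := by
    rw [hb]; exact contDiff_cross3 hT hN
  have hTau : ContDiff ℝ (⊤ : ℕ∞) τ := by
    rw [hτ]; exact hN'.inner ℝ hB
  have hF : ContDiff ℝ (⊤ : ℕ∞) f := by
    rw [hf]; exact hTau.div hK hκ0
  have dt : ∀ s, HasDerivAt t (κ s • n s) s := fun s => by
    have h := (hT.differentiable (by simp) s).hasDerivAt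
    have e : κ s • n s = deriv t s := by
      rw [hn]; exact smul_inv_smul₀ (hκ0 s) _
    rwa [e]
  have dn : ∀ s, HasDerivAt n (deriv n s) s := fun s =>
    (hN.differentiable (by simp) s).hasDerivAt
  have df : ∀ s, HasDerivAt f (deriv f s) s := fun s =>
    (hF.differentiable (by simp) s).hasDerivAt
  have htt : ∀ s, ⟪t s, t s⟫ = 1 := fun s => by
    rw [real_inner_self_eq_norm_sq, hunit]; norm_num
  have hnn : ∀ s, ⟪n s, n s⟫ = 1 := fun s => by
    have : ‖n s‖ = 1 := by
      rw [hn]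
      simp only [norm_smul, norm_inv, hκnorm, Real.norm_eq_abs, abs_of_pos (hκpos s)]
      exact inv_mul_cancel₀ (hκ0 s)
    rw [real_inner_self_eq_norm_sq, this]; norm_num
  have htn : ∀ s, ⟪t s, n s⟫ = 0 := fun s => by
    have h1 := (dt s).inner ℝ (dt s)
    have h2 : HasDerivAt (fun s => ⟪t s, t s⟫) 0 s := by
      simp only [htt]; exact hasDerivAt_const s 1
    have h := h1.unique h2
    rw [inner_smul_left, inner_smul_right, real_inner_comm (t s) (n s)] at h
    simp only [conj_trivial] at h
    have : κ s * ⟪t s, n s⟫ = 0 := by linarith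
    exact (mul_eq_zero.mp this).resolve_left (hκ0 s)
  have hdn_n : ∀ s, ⟪deriv n s, n s⟫ = 0 := fun s => by
    have h1 := (dn s).inner ℝ (dn s)
    have h2 : HasDerivAt (fun s => ⟪n s, n s⟫) 0 s := by
      simp only [hnn]; exact hasDerivAt_const s 1
    have h := h1.unique h2
    rw [real_inner_comm (deriv n s) (n s)] at h
    linarith
  have hdn_t : ∀ s, ⟪deriv n s, t s⟫ = -κ s := fun s => by
    have h1 := (dt s).inner ℝ (dn s)
    have h2 : HasDerivAt (fun s => ⟪t s, n s⟫) 0 s := by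
      simp only [htn]; exact hasDerivAt_const s 0
    have h := h1.unique h2
    rw [inner_smul_left, hnn, real_inner_comm (deriv n s) (t s)] at h
    simp only [conj_trivial] at h
    linarith
  have hbs : ∀ s, cross3 (t s) (n s) = b s := fun s => by rw [hb]
  have hn' : ∀ s, deriv n s = -κ s • t s + τ s • b s := fun s => by
    have h := frame_expansion (htt s) (hnn s) (htn s) (deriv n s)
    rw [hdn_t, hdn_n, hbs] at h
    rw [h, hτ]
    simp
  have dp : ∀ s, HasDerivAt (fun s => ⟪t s, v⟫) (κ s * c) s := fun s => by
    have h := (dt s).inner ℝ (hasDerivAt_const s v)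
    simpa [inner_smul_left, hangle] using h
  have dq : ∀ s, HasDerivAt (fun s => ⟪b s, v⟫) (-(τ s * c)) s := fun s => by
    have h := hasDerivAt_inner_cross3 (dt s) (dn s) v
    simp only [hbs] at h
    convert h using 1
    have h1 := htt s
    have h2 := htn s
    -- `n × n = 0` and `t × (t × n) = -n`.
    rw [← hangle s, hn', ← hbs]
    simp only [inner_eq_coords, cross3_zero, cross3_one, cross3_two, PiLp.add_apply,
      PiLp.smul_apply, smul_eq_mul] at h1 h2 ⊢
    linear_combination
      τ s * (n s 0 * v 0 + n s 1 * v 1 + n s 2 * v 2) * h1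
        - τ s * (t s 0 * v 0 + t s 1 * v 1 + t s 2 * v 2) * h2
  have hfκ : ∀ s, τ s = f s * κ s := fun s => by
    rw [hf]; exact (div_mul_cancel₀ _ (hκ0 s)).symm
  have hpq : ∀ s, ⟪t s, v⟫ = f s * ⟪b s, v⟫ := fun s => by
    have h1 := (dn s).inner ℝ (hasDerivAt_const s v)
    have h2 : HasDerivAt (fun s => ⟪n s, v⟫) 0 s := by
      simp only [hangle]; exact hasDerivAt_const s c
    have h := h1.unique h2
    rw [hn', hfκ, inner_zero_right, zero_add, inner_add_left, inner_smul_left,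
      inner_smul_left] at h
    simp only [conj_trivial] at h
    refine mul_left_cancel₀ (hκ0 s) ?_
    linarith
  intro s
  have hnorm : ⟪t s, v⟫ ^ 2 + c ^ 2 + ⟪b s, v⟫ ^ 2 = 1 := by
    have h := congrArg (fun w => ⟪w, v⟫) (frame_expansion (htt s) (hnn s) (htn s) v)
    simp only [hbs, inner_add_left, inner_smul_left, conj_trivial, real_inner_self_eq_norm_sq, hv,
      real_inner_comm _ v, hangle] at h
    linarith
  have hq : ⟪b s, v⟫ ^ 2 * (1 + f s ^ 2) = 1 - c ^ 2 := by
    rw [hpq] at hnorm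
    linear_combination hnorm
  have hder : κ s * c * (1 + f s ^ 2) = deriv f s * ⟪b s, v⟫ := by
    have h1 := dp s
    simp only [hpq] at h1
    have h := h1.unique ((df s).mul (dq s))
    rw [hfκ] at h
    linear_combination h
  have hmain : deriv f s ^ 2 * (1 - c ^ 2) = c ^ 2 * (κ s ^ 2 * (1 + f s ^ 2) ^ 3) := by
    rw [← hq]
    linear_combination
      (-(1 + f s ^ 2)) * (κ s * c * (1 + f s ^ 2) + deriv f s * ⟪b s, v⟫) * hder
  have hpos : (0 : ℝ) < 1 + f s ^ 2 := by positivity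
  have hpow : ((1 + f s ^ 2) ^ ((3 : ℝ) / 2)) ^ 2 = (1 + f s ^ 2) ^ 3 := by
    rw [← Real.rpow_natCast, ← Real.rpow_mul hpos.le, ← Real.rpow_natCast]
    norm_num
  have hσs : σ s = deriv f s / (κ s * (1 + f s ^ 2) ^ ((3 : ℝ) / 2)) := by rw [hσ]
  have hden : κ s ^ 2 * (1 + f s ^ 2) ^ 3 ≠ 0 :=
    mul_ne_zero (pow_ne_zero _ (hκ0 s)) (pow_ne_zero _ hpos.ne')
  rw [hσs, div_pow, mul_pow, hpow, div_mul_eq_mul_div, div_eq_iff hden]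
  exact hmain
end

section
/- (Theorem 4.14.) γ is a g-clad helix if and only if ψ is a constant function; that is, writing N_n(s) = (σ(s)·(f(s)·t(s) + b(s))/√(1 + f(s)²) − n(s))/√(1 + σ(s)²) for the principal normal of the normal indicatrix, there exist a unit vector v ∈ ℝ³ and a constant c with ⟪N_n(s), v⟫ = c for all s (i.e. the spherical image of the principal normal is a slant helix) if and only if there exists a constant c' with ψ(s) = Γ'(s)/(√(κ(s)² + τ(s)²)·√(1 + σ(s)²)·(1 + Γ(s)²)^{3/2}) = c' for all s. -/
/-!
The proof iterates one construction on moving frames. Consider an orthonormal frame `(T, N, B)`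
obeying Frenet equations with speed-weighted curvature `K > 0` and ratio `g` (torsion over
curvature):
`T' = K N`, `N' = K (-T + g B)`, `B' = -K g N`.
The frame obtained from it by starting at `N`,
`(N, (-T + g B) / √(1 + g²), (g T + B) / √(1 + g²))`,
obeys equations of the same form with curvature `K √(1 + g²)` and ratio
`g' / (K (1 + g²)^(3/2))` (`FrenetFrame.step`).

Starting from the Frenet frame of `γ`, with ratio `f` (`frenetFrame_of_curve`), three steps turn
the ratio into `σ`, then `Γ`, then `ψ`, and the leading vector of the third frame is exactly `N_n`.
The theorem is therefore Lancret's theorem for that frame: the leading vector makes a constant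
angle with some fixed direction iff the ratio is constant (`FrenetFrame.lancret`).
-/

open scoped RealInnerProductSpace Topology

/-- Notation for the Euclidean three-space. -/
local notation "E3" => EuclideanSpace ℝ (Fin 3)

/-- A smooth-coefficient orthonormal frame `(T, N, B)` in `ℝ³` satisfying the Frenet equations
with curvature `K > 0` (with respect to the given parameter, so the speed is absorbed in `K`)
and torsion `K * g`; thus `g` is the ratio of torsion to curvature. -/
structure FrenetFrame (T N B : ℝ → E3) (K g : ℝ → ℝ) : Prop where
  smoothK : ContDiff ℝ (⊤ : ℕ∞) K
  smooth_g : ContDiff ℝ (⊤ : ℕ∞) g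
  pos : ∀ s, 0 < K s
  TT : ∀ s, ⟪T s, T s⟫ = 1
  NN : ∀ s, ⟪N s, N s⟫ = 1
  BB : ∀ s, ⟪B s, B s⟫ = 1
  TN : ∀ s, ⟪T s, N s⟫ = 0
  TB : ∀ s, ⟪T s, B s⟫ = 0
  NB : ∀ s, ⟪N s, B s⟫ = 0
  dT : ∀ s, HasDerivAt T (K s • N s) s
  dN : ∀ s, HasDerivAt N (K s • (-T s + g s • B s)) s
  dB : ∀ s, HasDerivAt B (-(K s * g s) • N s) s

lemma eq_sum_of_orthonormal_triple {T N B : E3} (TT : ⟪T, T⟫ = 1) (NN : ⟪N, N⟫ = 1)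
    (BB : ⟪B, B⟫ = 1) (TN : ⟪T, N⟫ = 0) (TB : ⟪T, B⟫ = 0) (NB : ⟪N, B⟫ = 0) (x : E3) :
    x = ⟪T, x⟫ • T + ⟪N, x⟫ • N + ⟪B, x⟫ • B := by
  have ho : Orthonormal ℝ ![T, N, B] := by
    rw [orthonormal_iff_ite]
    intro i j
    fin_cases i <;> fin_cases j <;>
      simp [TT, NN, BB, TN, TB, NB, real_inner_comm T N, real_inner_comm T B,
        real_inner_comm N B, -inner_self_eq_norm_sq_to_K]
  have hc : Fintype.card (Fin 3) = Module.finrank ℝ E3 := by simp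
  let bas := OrthonormalBasis.mk ho (by
    have h := (basisOfOrthonormalOfCardEqFinrank ho hc).span_eq
    rw [coe_basisOfOrthonormalOfCardEqFinrank] at h
    exact h.ge)
  have h := bas.sum_repr' x
  simp only [bas, OrthonormalBasis.coe_mk, Fin.sum_univ_three] at h
  exact h.symm

lemma rpow_three_halves {x : ℝ} (hx : 0 < x) : x ^ ((3 : ℝ) / 2) = x * √x := by
  rw [Real.sqrt_eq_rpow, show (3 : ℝ) / 2 = 1 + 1 / 2 by norm_num, Real.rpow_add hx, Real.rpow_one]

lemma hasDerivAt_inv_sqrt {g : ℝ → ℝ} {g' s : ℝ} (hg : HasDerivAt g g' s) :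
    HasDerivAt (fun x => (√(1 + g x ^ 2))⁻¹) (-(g s * g') / √(1 + g s ^ 2) ^ 3) s := by
  have hp : 0 < 1 + g s ^ 2 := by positivity
  have hr : 0 < √(1 + g s ^ 2) := Real.sqrt_pos.2 hp
  refine ((((hg.fun_pow 2).const_add 1).sqrt hp.ne').fun_inv hr.ne').congr_deriv ?_
  norm_num
  field_simp

/-- The derived frame, led by the principal normal, again satisfies Frenet equations. -/
lemma FrenetFrame.step {T N B : ℝ → E3} {K g : ℝ → ℝ} (h : FrenetFrame T N B K g) :
    FrenetFrame N (fun s => (√(1 + g s ^ 2))⁻¹ • (-T s + g s • B s))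
      (fun s => (√(1 + g s ^ 2))⁻¹ • (g s • T s + B s))
      (fun s => K s * √(1 + g s ^ 2))
      (fun s => deriv g s / (K s * (1 + g s ^ 2) ^ ((3 : ℝ) / 2))) := by
  have hp : ∀ s, 0 < 1 + g s ^ 2 := fun s => by positivity
  have hr : ∀ s, 0 < √(1 + g s ^ 2) := fun s => Real.sqrt_pos.2 (hp s)
  have hr2 : ∀ s, √(1 + g s ^ 2) ^ 2 = 1 + g s ^ 2 := fun s => Real.sq_sqrt (hp s).le
  have h1 : ContDiff ℝ (⊤ : ℕ∞) (fun s => 1 + g s ^ 2) := contDiff_const.add (h.smooth_g.pow 2)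
  have h2 : ContDiff ℝ (⊤ : ℕ∞) (fun s => √(1 + g s ^ 2)) := h1.sqrt fun s => (hp s).ne'
  have hg : ∀ s, HasDerivAt g (deriv g s) s := fun s =>
    (h.smooth_g.differentiable (by simp) s).hasDerivAt
  have NT : ∀ s, ⟪N s, T s⟫ = 0 := fun s => by rw [real_inner_comm, h.TN]
  have BT : ∀ s, ⟪B s, T s⟫ = 0 := fun s => by rw [real_inner_comm, h.TB]
  refine ⟨h.smoothK.mul h2, ?_, fun s => mul_pos (h.pos s) (hr s), h.NN, ?_, ?_, ?_, ?_, ?_,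
    ?_, ?_, ?_⟩
  · simp only [rpow_three_halves (hp _)]
    refine ContDiff.div ?_ (h.smoothK.mul (h1.mul h2)) fun s =>
      (mul_pos (h.pos s) (mul_pos (hp s) (hr s))).ne'
    exact (contDiff_infty_iff_deriv.1 h.smooth_g).2
  · intro s
    simp only [inner_smul_left, inner_smul_right, inner_add_left, inner_add_right, inner_neg_left,
      inner_neg_right, h.TT, h.TB, BT, h.BB, RCLike.conj_to_real]
    have := hr s
    field_simp
    rw [hr2]; ring
  · intro s
    simp only [inner_smul_left, inner_smul_right, inner_add_left, inner_add_right, inner_neg_left,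
      inner_neg_right, h.TT, h.TB, BT, h.BB, RCLike.conj_to_real]
    have := hr s
    field_simp
    rw [hr2]; ring
  · intro s
    simp [inner_smul_right, inner_add_right, NT, h.NB]
  · intro s
    simp [inner_smul_right, inner_add_right, NT, h.NB]
  · intro s
    simp only [inner_smul_left, inner_smul_right, inner_add_left, inner_add_right, inner_neg_left,
      inner_neg_right, h.TT, h.TB, BT, h.BB, RCLike.conj_to_real]
    ring
  · intro s
    convert h.dN s using 1
    rw [smul_smul, mul_assoc, mul_inv_cancel₀ (hr s).ne', mul_one]
  · intro s
    refine ((hasDerivAt_inv_sqrt (hg s)).smul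
      ((h.dT s).neg.add ((hg s).smul (h.dB s)))).congr_deriv ?_
    have e := hr2 s
    have hr0 := (hr s).ne'
    have hK0 := (h.pos s).ne'
    simp only [rpow_three_halves (hp s), Pi.neg_apply, Pi.add_apply, Pi.smul_apply']
    generalize √(1 + g s ^ 2) = r at e hr0 ⊢
    rw [← e]
    match_scalars <;> field_simp <;> grind
  · intro s
    refine ((hasDerivAt_inv_sqrt (hg s)).smul
      (((hg s).smul (h.dT s)).add (h.dB s))).congr_deriv ?_
    have e := hr2 s
    have hr0 := (hr s).ne'
    have hK0 := (h.pos s).ne'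
    simp only [rpow_three_halves (hp s), Pi.neg_apply, Pi.add_apply, Pi.smul_apply']
    generalize √(1 + g s ^ 2) = r at e hr0 ⊢
    rw [← e]
    match_scalars <;> field_simp <;> grind

/-- Lancret's theorem: the axis is the normalized Darboux direction `(g T + B) / √(1 + g²)`, which
is constant exactly when the ratio `g` is. -/
lemma FrenetFrame.lancret {T N B : ℝ → E3} {K g : ℝ → ℝ} (h : FrenetFrame T N B K g) :
    (∃ (v : E3) (c : ℝ), ‖v‖ = 1 ∧ ∀ s : ℝ, ⟪T s, v⟫ = c) ↔ ∃ c' : ℝ, ∀ s : ℝ, g s = c' := by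
  constructor
  · rintro ⟨v, c, hv, hc⟩
    have hN : ∀ s, ⟪N s, v⟫ = 0 := fun s => by
      have h1 := (h.dT s).inner ℝ (hasDerivAt_const s v)
      have h2 := h1.unique ((hasDerivAt_const s c).congr_of_eventuallyEq (.of_forall hc))
      simpa [inner_smul_left, (h.pos s).ne'] using h2
    have hgB : ∀ s, g s * ⟪B s, v⟫ = c := fun s => by
      have h1 := (h.dN s).inner ℝ (hasDerivAt_const s v)
      have h2 := h1.unique ((hasDerivAt_const s (0 : ℝ)).congr_of_eventuallyEq (.of_forall hN))
      simp only [inner_zero_right, inner_smul_left, inner_add_left, inner_neg_left, hc,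
        RCLike.conj_to_real] at h2
      exact mul_left_cancel₀ (h.pos s).ne' (by linarith)
    have hB : ∀ s, ⟪B s, v⟫ = ⟪B 0, v⟫ := fun s => by
      have hd : ∀ s, HasDerivAt (fun s => ⟪B s, v⟫) 0 s := fun s => by
        refine ((h.dB s).inner ℝ (hasDerivAt_const s v)).congr_deriv ?_
        simp [inner_smul_left, hN]
      exact is_const_of_deriv_eq_zero (fun s => (hd s).differentiableAt) (fun s => (hd s).deriv) s 0
    -- Were `⟪B, v⟫` zero, `v` would be orthogonal to the whole frame.
    have hB0 : ⟪B 0, v⟫ ≠ 0 := fun h0 => by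
      have hc0 : c = 0 := by rw [← hgB 0, h0, mul_zero]
      have := eq_sum_of_orthonormal_triple (h.TT 0) (h.NN 0) (h.BB 0) (h.TN 0) (h.TB 0) (h.NB 0) v
      rw [hc, hN, h0, hc0] at this
      simp [this] at hv
    refine ⟨c / ⟪B 0, v⟫, fun s => ?_⟩
    rw [eq_div_iff hB0, ← hB s, hgB]
  · rintro ⟨m, hm⟩
    have hd : ∀ s, HasDerivAt (fun s => m • T s + B s) 0 s := fun s => by
      refine (((h.dT s).const_smul m).add (h.dB s)).congr_deriv ?_
      rw [hm s]; module
    have hV : ∀ s, m • T s + B s = m • T 0 + B 0 := fun s =>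
      is_const_of_deriv_eq_zero (fun s => (hd s).differentiableAt) (fun s => (hd s).deriv) s 0
    have hne : m • T 0 + B 0 ≠ 0 := fun h0 => by
      have h1 : ⟪B 0, m • T 0 + B 0⟫ = 1 := by
        rw [inner_add_right, inner_smul_right, real_inner_comm, h.TB, h.BB]; ring
      rw [h0, inner_zero_right] at h1
      exact zero_ne_one h1
    refine ⟨‖m • T 0 + B 0‖⁻¹ • (m • T 0 + B 0), ‖m • T 0 + B 0‖⁻¹ * m, ?_, fun s => ?_⟩
    · rw [norm_smul, norm_inv, norm_norm, inv_mul_cancel₀ (norm_ne_zero_iff.2 hne)]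
    · rw [inner_smul_right, ← hV s, inner_add_right, inner_smul_right, h.TT, h.TB]; ring

lemma inner_eq_coords_s15 (u v : E3) : ⟪u, v⟫ = u 0 * v 0 + u 1 * v 1 + u 2 * v 2 := by
  simp [PiLp.inner_apply, Fin.sum_univ_three]; ring

lemma contDiff_cross3_s15 {u v : ℝ → E3} (hu : ContDiff ℝ (⊤ : ℕ∞) u) (hv : ContDiff ℝ (⊤ : ℕ∞) v) :
    ContDiff ℝ (⊤ : ℕ∞) fun s => cross3 (u s) (v s) := by
  have hu' := contDiff_euclidean.1 hu
  have hv' := contDiff_euclidean.1 hv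
  rw [contDiff_euclidean]
  intro i
  fin_cases i
  · exact ((hu' 1).mul (hv' 2)).sub ((hu' 2).mul (hv' 1))
  · exact ((hu' 2).mul (hv' 0)).sub ((hu' 0).mul (hv' 2))
  · exact ((hu' 0).mul (hv' 1)).sub ((hu' 1).mul (hv' 0))

/-- Differentiating a constant inner product. -/
lemma inner_deriv_eq_neg {u v : ℝ → E3} (hu : ContDiff ℝ (⊤ : ℕ∞) u)
    (hv : ContDiff ℝ (⊤ : ℕ∞) v) {c : ℝ} (h : ∀ s, ⟪u s, v s⟫ = c) (s : ℝ) :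
    ⟪u s, deriv v s⟫ = -⟪deriv u s, v s⟫ := by
  have h1 := (hu.differentiable (by simp) s).hasDerivAt.inner ℝ
    (hv.differentiable (by simp) s).hasDerivAt
  have h2 := h1.unique ((hasDerivAt_const s c).congr_of_eventuallyEq (.of_forall h))
  linarith

/-- The Frenet equations of a unit-speed space curve, with torsion written as `κ * (τ / κ)`. -/
lemma frenetFrame_of_curve {t : ℝ → E3} (ht : ContDiff ℝ (⊤ : ℕ∞) t)
    (n b : ℝ → E3) (κ τ : ℝ → ℝ)
    (hunit : ∀ s, ‖t s‖ = 1)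
    (hκ : κ = fun s => ‖deriv t s‖)
    (hκpos : ∀ s, 0 < κ s)
    (hn : n = fun s => (κ s)⁻¹ • deriv t s)
    (hb : b = fun s => cross3 (t s) (n s))
    (hτ : τ = fun s => ⟪deriv n s, b s⟫) :
    FrenetFrame t n b κ (fun s => τ s / κ s) := by
  have ht' : ContDiff ℝ (⊤ : ℕ∞) (deriv t) := (contDiff_infty_iff_deriv.1 ht).2
  have hne : ∀ s, κ s ≠ 0 := fun s => (hκpos s).ne'
  have sκ : ContDiff ℝ (⊤ : ℕ∞) κ := by
    rw [hκ]
    exact ht'.norm ℝ fun s h0 => hne s (by simp [hκ, h0])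
  have sn : ContDiff ℝ (⊤ : ℕ∞) n := by
    rw [hn]; exact (sκ.inv hne).smul ht'
  have sb : ContDiff ℝ (⊤ : ℕ∞) b := by
    rw [hb]; exact contDiff_cross3_s15 ht sn
  have sτ : ContDiff ℝ (⊤ : ℕ∞) τ := by
    rw [hτ]; exact (contDiff_infty_iff_deriv.1 sn).2.inner ℝ sb
  have dt : ∀ s, deriv t s = κ s • n s := fun s => by
    simp [hn, smul_smul, hne s]
  have TT : ∀ s, ⟪t s, t s⟫ = 1 := fun s => by
    rw [real_inner_self_eq_norm_sq, hunit]; norm_num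
  have NN : ∀ s, ⟪n s, n s⟫ = 1 := fun s => by
    have h1 : ‖n s‖ = 1 := by
      have h2 : ‖deriv t s‖ = κ s := by rw [hκ]
      simp only [hn]
      rw [norm_smul, h2, norm_inv, Real.norm_of_nonneg (hκpos s).le, inv_mul_cancel₀ (hne s)]
    rw [real_inner_self_eq_norm_sq, h1]; norm_num
  have TN : ∀ s, ⟪t s, n s⟫ = 0 := fun s => by
    have h1 := inner_deriv_eq_neg ht ht TT s
    rw [real_inner_comm (t s) (deriv t s), dt, inner_smul_right] at h1
    have h2 : κ s * ⟪t s, n s⟫ = 0 := by linarith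
    exact (mul_eq_zero.1 h2).resolve_left (hne s)
  have TB : ∀ s, ⟪t s, b s⟫ = 0 := fun s => by rw [hb]; exact inner_cross3_left _ _
  have NB : ∀ s, ⟪n s, b s⟫ = 0 := fun s => by rw [hb]; exact inner_cross3_right _ _
  have BB : ∀ s, ⟪b s, b s⟫ = 1 := fun s => by
    rw [hb]
    simp only [inner_cross3_self, TT, NN, TN]; norm_num
  have hτs : ∀ s, ⟪deriv n s, b s⟫ = τ s := fun s => by rw [hτ]
  refine ⟨sκ, sτ.div sκ hne, hκpos, TT, NN, BB, TN, TB, NB, fun s => ?_, fun s => ?_, fun s => ?_⟩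
  · rw [← dt]; exact (ht.differentiable (by simp) s).hasDerivAt
  · refine (sn.differentiable (by simp) s).hasDerivAt.congr_deriv ?_
    have h1 : ⟪t s, deriv n s⟫ = -κ s := by
      rw [inner_deriv_eq_neg ht sn TN, dt, inner_smul_left, NN]; simp
    have h2 : ⟪n s, deriv n s⟫ = 0 := by
      have := inner_deriv_eq_neg sn sn NN s
      rw [real_inner_comm (n s) (deriv n s)] at this
      linarith
    rw [eq_sum_of_orthonormal_triple (TT s) (NN s) (BB s) (TN s) (TB s) (NB s) (deriv n s),
      h1, h2, real_inner_comm, hτs]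
    have := hne s
    match_scalars <;> field_simp
  · refine (sb.differentiable (by simp) s).hasDerivAt.congr_deriv ?_
    have h1 : ⟪t s, deriv b s⟫ = 0 := by
      rw [inner_deriv_eq_neg ht sb TB, dt, inner_smul_left, NB]; simp
    have h2 : ⟪n s, deriv b s⟫ = -τ s := by
      rw [inner_deriv_eq_neg sn sb NB, hτs]
    have h3 : ⟪b s, deriv b s⟫ = 0 := by
      have := inner_deriv_eq_neg sb sb BB s
      rw [real_inner_comm (b s) (deriv b s)] at this
      linarith
    rw [eq_sum_of_orthonormal_triple (TT s) (NN s) (BB s) (TN s) (TB s) (NB s) (deriv b s),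
      h1, h2, h3]
    have := hne s
    match_scalars <;> field_simp

/-- Theorem 4.14 (classical form): `γ` is a g-clad helix (the principal normal
`N_n = (σ·(f•t + b)/√(1+f²) - n)/√(1+σ²)` of the normal indicatrix makes a constant
angle with a fixed unit vector) iff
`ψ = Γ'/(√(κ²+τ²)·√(1+σ²)·(1+Γ²)^{3/2})` is constant. -/
theorem g_clad_helix_characterization
    (γ : ℝ → EuclideanSpace ℝ (Fin 3))
    (hγ : ContDiff ℝ (⊤ : ℕ∞) γ)
    (t n b : ℝ → EuclideanSpace ℝ (Fin 3)) (κ τ : ℝ → ℝ)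
    (ht : t = deriv γ)
    (hunit : ∀ s, ‖t s‖ = 1)
    (hκ : κ = fun s => ‖deriv t s‖)
    (hκpos : ∀ s, 0 < κ s)
    (hn : n = fun s => (κ s)⁻¹ • deriv t s)
    (hb : b = fun s => cross3 (t s) (n s))
    (hτ : τ = fun s => ⟪deriv n s, b s⟫)
    (f : ℝ → ℝ) (hf : f = fun s => τ s / κ s)
    (σ : ℝ → ℝ)
    (hσ : σ = fun s => deriv f s / (κ s * (1 + f s ^ 2) ^ ((3 : ℝ) / 2)))
    (Γ : ℝ → ℝ)
    (hΓ : Γ = fun s => deriv σ s /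
      (Real.sqrt (κ s ^ 2 + τ s ^ 2) * (1 + σ s ^ 2) ^ ((3 : ℝ) / 2)))
    (ψ : ℝ → ℝ)
    (hψ : ψ = fun s => deriv Γ s /
      (Real.sqrt (κ s ^ 2 + τ s ^ 2) * Real.sqrt (1 + σ s ^ 2) *
        (1 + Γ s ^ 2) ^ ((3 : ℝ) / 2)))
    (Nn : ℝ → EuclideanSpace ℝ (Fin 3))
    (hNn : Nn = fun s => (Real.sqrt (1 + σ s ^ 2))⁻¹ •
      (σ s • ((Real.sqrt (1 + f s ^ 2))⁻¹ • (f s • t s + b s)) - n s))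
    :
    (∃ (v : EuclideanSpace ℝ (Fin 3)) (c : ℝ), ‖v‖ = 1 ∧ ∀ s : ℝ, ⟪Nn s, v⟫ = c) ↔
      ∃ c' : ℝ, ∀ s : ℝ, ψ s = c' := by
  have ht' : ContDiff ℝ (⊤ : ℕ∞) t := by
    rw [ht]; exact (contDiff_infty_iff_deriv.1 hγ).2
  have F0 : FrenetFrame t n b κ f := by
    rw [hf]; exact frenetFrame_of_curve ht' n b κ τ hunit hκ hκpos hn hb hτ
  -- The speed of the normal indicatrix is the curvature of the first derived frame.
  have hw : (fun s => κ s * √(1 + f s ^ 2)) = fun s => √(κ s ^ 2 + τ s ^ 2) := by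
    funext s
    have hk := hκpos s
    rw [show κ s ^ 2 + τ s ^ 2 = κ s ^ 2 * (1 + f s ^ 2) by rw [hf]; field_simp,
      Real.sqrt_mul (sq_nonneg _), Real.sqrt_sq hk.le]
  have F1 := F0.step
  rw [← hσ, hw] at F1
  have F2 := F1.step
  beta_reduce at F2
  rw [← hΓ] at F2
  have F3 := F2.step
  beta_reduce at F3
  rw [← hψ] at F3
  have hlead : Nn = fun s => (√(1 + σ s ^ 2))⁻¹ •
      (-n s + σ s • ((√(1 + f s ^ 2))⁻¹ • (f s • t s + b s))) := by
    rw [hNn]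
    funext s
    rw [sub_eq_neg_add]
  rw [← hlead] at F3
  exact F3.lancret
end
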